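/- Suppose G ⊂ ℝⁿ satisfies a β-quasihyperbolic boundary condition (β ∈ (0,1]) and dim_M(∂G) < λ with λ ∈ [n-1, n). Then there exist σ ≥ 1 and c > 0 such that for all j ∈ ℕ: (i) every Whitney cube Q of side 2^{-j} satisfies 2^{-jn} ≤ |S(Q)| ≤ σ · 2^{-jnβ}, hence W_j = ⋃_{k=0}^{[j - jβ]} W_{j,k,σ} where W_{j,k,σ} = {Q ∈ W_j : 2^{-(j-k)n} ≤ |S(Q)| ≤ σ·2^{-(j-k-1)n}}; and (ii) #W_{j,k,σ} ≤ c · j · 2^{n(j-k) + jβ(λ - n)} for each 0 ≤ k ≤ [j - jβ]. -/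

import Mathlib

open MeasureTheory ENNReal

/-- The quasihyperbolic distance `k_G(x, y) = inf_γ ∫_γ ds / dist(z, ∂G)`, the infimum
being over rectifiable curves in `G` from `x` to `y`, parametrized by arc length
(encoded as `1`-Lipschitz parametrizations). -/
noncomputable def qhDist {n : ℕ} (G : Set (EuclideanSpace ℝ (Fin n)))
    (x y : EuclideanSpace ℝ (Fin n)) : ℝ :=
  sInf {v : ℝ | ∃ (L : ℝ) (γ : ℝ → EuclideanSpace ℝ (Fin n)), 0 ≤ L ∧
    LipschitzWith 1 γ ∧ γ 0 = x ∧ γ L = y ∧ (∀ t ∈ Set.Icc (0:ℝ) L, γ t ∈ G) ∧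
    v = ∫ t in (0:ℝ)..L, 1 / Metric.infDist (γ t) (frontier G)}

/-- `G` satisfies a `β`-quasihyperbolic boundary condition with base point `x₀` and
constant `c`: `k_G(x, x₀) ≤ (1/β) log(1/dist(x, ∂G)) + c` for all `x ∈ G`. -/
def QHBCWith {n : ℕ} (G : Set (EuclideanSpace ℝ (Fin n))) (β : ℝ)
    (x₀ : EuclideanSpace ℝ (Fin n)) (c : ℝ) : Prop :=
  ∀ x ∈ G, qhDist G x x₀ ≤ (1 / β) * Real.log (1 / Metric.infDist x (frontier G)) + c

/-- `G` satisfies a `β`-quasihyperbolic boundary condition. -/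
def QHBC {n : ℕ} (G : Set (EuclideanSpace ℝ (Fin n))) (β : ℝ) : Prop :=
  ∃ x₀ ∈ G, ∃ c : ℝ, QHBCWith G β x₀ c

/-- `G` supports the `(q,p)`-Poincaré inequality
`(∫_G |u - u_G|^q)^{1/q} ≤ c (∫_G |∇u|^p)^{1/p}` for Sobolev functions on `G`. -/
def SupportsPoincare {n : ℕ} (G : Set (EuclideanSpace ℝ (Fin n))) (q p : ℝ) : Prop :=
  ∃ c : ℝ, ∀ u : EuclideanSpace ℝ (Fin n) → ℝ,
    DifferentiableOn ℝ u G → IntegrableOn u G volume →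
    IntegrableOn (fun x => ‖fderivWithin ℝ u G x‖ ^ p) G volume →
    (∫ x in G, |u x - (∫ y in G, u y) / (volume G).toReal| ^ q) ^ (1 / q)
      ≤ c * (∫ x in G, ‖fderivWithin ℝ u G x‖ ^ p) ^ (1 / p)

open MeasureTheory ENNReal

/-- The closed axis-parallel cube with center `c` and side length `l`. -/
def closedCube {n : ℕ} (c : EuclideanSpace ℝ (Fin n)) (l : ℝ) :
    Set (EuclideanSpace ℝ (Fin n)) :=
  {y | ∀ i, |y i - c i| ≤ l / 2}

/-- The distance between two sets. -/
noncomputable def setDist {n : ℕ} (A B : Set (EuclideanSpace ℝ (Fin n))) : ℝ :=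
  sInf {d : ℝ | ∃ a ∈ A, ∃ b ∈ B, d = dist a b}

/-- A Whitney decomposition of `G`: a countable family of closed dyadic cubes with
pairwise disjoint interiors whose union is `G`, each cube `Q` satisfying
`diam(Q) ≤ dist(Q, ∂G) ≤ 4 diam(Q)`. The `i`-th cube has center `c i` and side
length `s i`. -/
structure WhitneyDecomp (n : ℕ) (G : Set (EuclideanSpace ℝ (Fin n))) where
  c : ℕ → EuclideanSpace ℝ (Fin n)
  s : ℕ → ℝ
  dyadic : ∀ i, ∃ (j : ℤ) (k : Fin n → ℤ), s i = (2:ℝ) ^ (-j) ∧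
    ∀ m, c i m = ((k m : ℝ) + 1 / 2) * (2:ℝ) ^ (-j)
  disjoint_interiors : Pairwise fun i j =>
    interior (closedCube (c i) (s i)) ∩ interior (closedCube (c j) (s j)) = ∅
  cover : G = ⋃ i, closedCube (c i) (s i)
  diam_le_dist : ∀ i, Metric.diam (closedCube (c i) (s i))
    ≤ setDist (closedCube (c i) (s i)) (frontier G)
  dist_le_diam : ∀ i, setDist (closedCube (c i) (s i)) (frontier G)
    ≤ 4 * Metric.diam (closedCube (c i) (s i))

/-- The `i`-th cube of a Whitney decomposition. -/
def WhitneyDecomp.cube {n : ℕ} {G : Set (EuclideanSpace ℝ (Fin n))}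
    (W : WhitneyDecomp n G) (i : ℕ) : Set (EuclideanSpace ℝ (Fin n)) :=
  closedCube (W.c i) (W.s i)

/-- The `λ`-dimensional Minkowski precontent
`M_λ(E, r) = |⋃_{x ∈ E} B(x, r)| / r^{n-λ}`. -/
noncomputable def minkowskiPrecontent (n : ℕ) (E : Set (EuclideanSpace ℝ (Fin n)))
    (l r : ℝ) : ℝ≥0∞ :=
  volume (⋃ x ∈ E, Metric.ball x r) / ENNReal.ofReal (r ^ ((n : ℝ) - l))

/-- The upper Minkowski dimension
`dim_M(E) = sup {λ ≥ 0 : limsup_{r → 0+} M_λ(E, r) = ∞}`. -/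
noncomputable def upperMinkowskiDim (n : ℕ) (E : Set (EuclideanSpace ℝ (Fin n))) : ℝ :=
  sSup {l : ℝ | 0 ≤ l ∧
    Filter.limsup (fun r => minkowskiPrecontent n E l r) (nhdsWithin 0 (Set.Ioi 0)) = ⊤}

def opCube {n : ℕ} (c : EuclideanSpace ℝ (Fin n)) (l : ℝ) :
    Set (EuclideanSpace ℝ (Fin n)) :=
  {y | ∀ i, |y i - c i| < l / 2}

theorem opCube_isOpen {n : ℕ} (c : EuclideanSpace ℝ (Fin n)) (l : ℝ) : IsOpen (opCube c l) := by
  have : opCube c l = ⋂ i, {y | |y i - c i| < l / 2} := by ext; simp [opCube]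
  rw [this]
  refine isOpen_iInter_of_finite fun i => ?_
  exact isOpen_lt (by fun_prop) (by fun_prop)

theorem opCube_sub {n : ℕ} (c : EuclideanSpace ℝ (Fin n)) (l : ℝ) :
    opCube c l ⊆ closedCube c l := fun _ hy i => (hy i).le

theorem opCube_sub_int {n : ℕ} (c : EuclideanSpace ℝ (Fin n)) (l : ℝ) :
    opCube c l ⊆ interior (closedCube c l) :=
  interior_maximal (opCube_sub c l) (opCube_isOpen c l)

theorem vol_opCube {n : ℕ} (c : EuclideanSpace ℝ (Fin n)) (l : ℝ) (hl : 0 < l) :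
    volume (opCube c l) = ENNReal.ofReal (l ^ n) := by
  have h1 : opCube c l = (MeasurableEquiv.toLp 2 (Fin n → ℝ)).symm ⁻¹'
      (Set.pi Set.univ fun i => Set.Ioo (c i - l/2) (c i + l/2)) := by
    ext y
    simp only [opCube, Set.mem_ofPred_eq, Set.mem_preimage, Set.mem_pi, Set.mem_univ, true_implies,
      Set.mem_Ioo, abs_lt]
    refine forall_congr' fun i => ?_
    change _ ↔ c i - l/2 < y i ∧ y i < c i + l/2
    constructor <;> rintro ⟨h, h'⟩ <;> constructor <;> linarith
  rw [h1, (EuclideanSpace.volume_preserving_symm_measurableEquiv_toLp (Fin n)).measure_preimage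
    (MeasurableSet.univ_pi fun i => measurableSet_Ioo).nullMeasurableSet, Real.volume_pi_Ioo]
  have : ∀ i : Fin n, c i + l/2 - (c i - l/2) = l := fun i => by ring
  simp only [this, Finset.prod_const, Finset.card_univ, Fintype.card_fin]
  rw [ENNReal.ofReal_pow hl.le]

theorem vol_closedCube {n : ℕ} (c : EuclideanSpace ℝ (Fin n)) (l : ℝ) (hl : 0 < l) :
    volume (closedCube c l) = ENNReal.ofReal (l ^ n) := by
  have h1 : closedCube c l = (MeasurableEquiv.toLp 2 (Fin n → ℝ)).symm ⁻¹'
      (Set.pi Set.univ fun i => Set.Icc (c i - l/2) (c i + l/2)) := by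
    ext y
    simp only [closedCube, Set.mem_ofPred_eq, Set.mem_preimage, Set.mem_pi, Set.mem_univ, true_implies,
      Set.mem_Icc, abs_le]
    refine forall_congr' fun i => ?_
    change _ ↔ c i - l/2 ≤ y i ∧ y i ≤ c i + l/2
    constructor <;> rintro ⟨h, h'⟩ <;> constructor <;> linarith
  rw [h1, (EuclideanSpace.volume_preserving_symm_measurableEquiv_toLp (Fin n)).measure_preimage
    (MeasurableSet.univ_pi fun i => measurableSet_Icc).nullMeasurableSet, volume_pi_pi]
  simp only [Real.volume_Icc]
  have : ∀ i : Fin n, c i + l/2 - (c i - l/2) = l := fun i => by ring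
  simp only [this, Finset.prod_const, Finset.card_univ, Fintype.card_fin]
  rw [ENNReal.ofReal_pow hl.le]

theorem diam_closedCube {n : ℕ} (c : EuclideanSpace ℝ (Fin n)) (l : ℝ) (hl : 0 < l) :
    Metric.diam (closedCube c l) ≤ √n * l := by
  refine Metric.diam_le_of_forall_dist_le (by positivity) fun x hx y hy => ?_
  rw [EuclideanSpace.dist_eq]
  have h : ∑ i, dist (x i) (y i) ^ 2 ≤ ∑ i : Fin n, l ^ 2 := by
    refine Finset.sum_le_sum fun i _ => ?_
    have := hx i
    have := hy i
    have : dist (x i) (y i) ≤ l := by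
      rw [Real.dist_eq]; rw [abs_le] at *; constructor <;> linarith
    gcongr
  calc _ ≤ √(∑ i : Fin n, l ^ 2) := Real.sqrt_le_sqrt h
    _ = √n * l := by
      simp only [Finset.sum_const, Finset.card_univ, Fintype.card_fin, nsmul_eq_mul]
      rw [Real.sqrt_mul (by positivity), Real.sqrt_sq hl.le]

/-- volume of thickening bound -/
theorem thick_bound (n : ℕ) (E : Set (EuclideanSpace ℝ (Fin n))) (hE : Bornology.IsBounded E)
    (l : ℝ) (hl0 : 0 ≤ l) (hln : l < n) (hdim : upperMinkowskiDim n E < l) (K : ℝ) (hK : 0 < K) :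
    ∃ C : ℝ, 0 < C ∧ ∀ r, 0 < r → r ≤ K →
      volume (⋃ x ∈ E, Metric.ball x r) ≤ ENNReal.ofReal (C * r ^ ((n:ℝ) - l)) := by
  have hfin : ∀ r, volume (⋃ x ∈ E, Metric.ball x r) < ⊤ := by
    intro r
    rw [← Metric.thickening_eq_biUnion_ball]
    exact hE.thickening.measure_lt_top
  have hmono : ∀ r s, r ≤ s → volume (⋃ x ∈ E, Metric.ball x r) ≤
      volume (⋃ x ∈ E, Metric.ball x s) := fun r s h => measure_mono
    (Set.iUnion₂_mono fun x _ => Metric.ball_subset_ball h)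
  have hbdd : BddAbove {l : ℝ | 0 ≤ l ∧
    Filter.limsup (fun r => minkowskiPrecontent n E l r) (nhdsWithin 0 (Set.Ioi 0)) = ⊤} := by
    refine ⟨n, fun l' hl' => ?_⟩
    by_contra hcon
    push Not at hcon
    have h1 : Filter.limsup (fun r => minkowskiPrecontent n E l' r) (nhdsWithin 0 (Set.Ioi 0)) ≤
      volume (⋃ x ∈ E, Metric.ball x 1) := by
      refine Filter.limsup_le_of_le (by isBoundedDefault) ?_
      filter_upwards [Ioo_mem_nhdsGT (zero_lt_one' ℝ)] with r hr
      unfold minkowskiPrecontent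
      have h2 : 1 ≤ ENNReal.ofReal (r ^ ((n:ℝ) - l')) := by
        rw [ENNReal.one_le_ofReal]
        exact Real.one_le_rpow_of_pos_of_le_one_of_nonpos hr.1 hr.2.le (by linarith)
      calc _ ≤ volume (⋃ x ∈ E, Metric.ball x r) / 1 := ENNReal.div_le_div_left h2 _
        _ ≤ _ := by rw [div_one]; exact hmono _ _ hr.2.le
    rw [hl'.2] at h1
    exact (hfin 1).not_ge h1
  have hlim : Filter.limsup (fun r => minkowskiPrecontent n E l r) (nhdsWithin 0 (Set.Ioi 0)) < ⊤ := by
    rw [lt_top_iff_ne_top]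
    intro h
    exact (le_csSup hbdd ⟨hl0, h⟩).not_gt hdim
  obtain ⟨M, hM1, hM2⟩ := exists_between hlim
  have hev := Filter.eventually_lt_of_limsup_lt hM1
  rw [Filter.Eventually, mem_nhdsGT_iff_exists_Ioo_subset] at hev
  obtain ⟨r0, hr0, hsub⟩ := hev
  have hr0 : 0 < r0 := hr0
  set V := (volume (⋃ x ∈ E, Metric.ball x K)).toReal
  have hr0p : 0 < r0 ^ ((n:ℝ) - l) := Real.rpow_pos_of_pos hr0 _
  refine ⟨M.toReal + V / r0 ^ ((n:ℝ) - l) + 1, by positivity, fun r hr hrK => ?_⟩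
  have hrp : 0 < r ^ ((n:ℝ) - l) := Real.rpow_pos_of_pos hr _
  by_cases h : r < r0
  · have h3 : minkowskiPrecontent n E l r < M := hsub ⟨hr, h⟩
    unfold minkowskiPrecontent at h3
    have h4 := (ENNReal.div_le_iff (by simpa using hrp) ENNReal.ofReal_ne_top).1 h3.le
    refine h4.trans ?_
    rw [ENNReal.ofReal_mul (by positivity)]
    gcongr
    conv_lhs => rw [← ENNReal.ofReal_toReal hM2.ne]
    apply ENNReal.ofReal_le_ofReal
    have : 0 ≤ V / r0 ^ ((n:ℝ) - l) := by positivity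
    linarith
  · push Not at h
    refine (hmono _ _ hrK).trans ?_
    rw [← ENNReal.ofReal_toReal (hfin K).ne]
    apply ENNReal.ofReal_le_ofReal
    have h5 : r0 ^ ((n:ℝ) - l) ≤ r ^ ((n:ℝ) - l) := Real.rpow_le_rpow hr0.le h (by linarith)
    calc V = V / r0 ^ ((n:ℝ) - l) * r0 ^ ((n:ℝ) - l) := by field_simp
      _ ≤ (M.toReal + V / r0 ^ ((n:ℝ) - l) + 1) * r ^ ((n:ℝ) - l) := by
        have : 0 ≤ M.toReal := ENNReal.toReal_nonneg
        gcongr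
        linarith

theorem W_pos {n : ℕ} {G : Set (EuclideanSpace ℝ (Fin n))} (W : WhitneyDecomp n G) (i : ℕ) :
    0 < W.s i := by
  obtain ⟨j, k, h, -⟩ := W.dyadic i
  rw [h]; positivity

theorem W_disj {n : ℕ} {G : Set (EuclideanSpace ℝ (Fin n))} (W : WhitneyDecomp n G) :
    Pairwise (Function.onFun Disjoint fun i => opCube (W.c i) (W.s i)) := by
  intro i j hij
  refine Set.disjoint_of_subset (opCube_sub_int _ _) (opCube_sub_int _ _) ?_
  exact Set.disjoint_iff_inter_eq_empty.2 (W.disjoint_interiors hij)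

theorem W_sub {n : ℕ} {G : Set (EuclideanSpace ℝ (Fin n))} (W : WhitneyDecomp n G) (i : ℕ) :
    W.cube i ⊆ G := by
  conv_rhs => rw [W.cover]
  exact Set.subset_iUnion (fun i => closedCube (W.c i) (W.s i)) i

theorem W_fin {n : ℕ} {G : Set (EuclideanSpace ℝ (Fin n))} (hGb : Bornology.IsBounded G)
    (W : WhitneyDecomp n G) (a : ℝ) (ha : 0 < a) :
    {Q : ℕ | W.s Q = a}.Finite := by
  have hsub : (⋃ i, opCube (W.c i) (W.s i)) ⊆ G :=
    Set.iUnion_subset fun i => (opCube_sub _ _).trans (W_sub W i)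
  have := Measure.finite_const_le_meas_of_disjoint_iUnion (μ := volume)
    (ε := ENNReal.ofReal (a^n)) (by simp; positivity) (As := fun i => opCube (W.c i) (W.s i))
    (fun i => (opCube_isOpen _ _).measurableSet) (W_disj W)
    ((measure_mono hsub).trans_lt hGb.measure_lt_top).ne
  refine this.subset fun Q hQ => ?_
  simp only [Set.mem_ofPred_eq] at hQ ⊢
  rw [vol_opCube _ _ (W_pos W Q), hQ]

/-- double counting -/
theorem double_count {n : ℕ} {G : Set (EuclideanSpace ℝ (Fin n))} (W : WhitneyDecomp n G)
    (inChain : ℕ → ℕ → Prop)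
    (S : ℕ → Set (EuclideanSpace ℝ (Fin n)))
    (hShadow : ∀ Q, S Q = ⋃ R ∈ {R : ℕ | inChain Q R}, W.cube R)
    (F : Finset ℕ) (N : ℝ≥0∞) (U : Set (EuclideanSpace ℝ (Fin n)))
    (hU : ∀ Q ∈ F, S Q ⊆ U)
    (hN : ∀ R, ({Q : ℕ | Q ∈ F ∧ inChain Q R}.ncard : ℝ≥0∞) ≤ N) :
    ∑ Q ∈ F, volume (S Q) ≤ N * volume U := by
  classical
  let v : ℕ → ℝ≥0∞ := fun R => volume (opCube (W.c R) (W.s R))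
  have hv : ∀ R, volume (W.cube R) = v R := fun R => by
    simp only [v, WhitneyDecomp.cube]
    rw [vol_opCube _ _ (W_pos W R), vol_closedCube _ _ (W_pos W R)]
  let A : Set ℕ := {R | ∃ Q ∈ F, inChain Q R}
  have h1 : ∀ Q, volume (S Q) ≤ ∑' R, if inChain Q R then v R else 0 := by
    intro Q
    have : S Q = ⋃ R, if inChain Q R then W.cube R else ∅ := by
      rw [hShadow]
      ext x
      simp only [Set.mem_iUnion, Set.mem_ofPred_eq, exists_prop]
      refine exists_congr fun R => ?_
      split_ifs with h <;> simp [h]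
    rw [this]
    refine (measure_iUnion_le _).trans (ENNReal.tsum_le_tsum fun R => ?_)
    split_ifs
    · rw [hv]
    · simp
  calc ∑ Q ∈ F, volume (S Q) ≤ ∑ Q ∈ F, ∑' R, (if inChain Q R then v R else 0) :=
        Finset.sum_le_sum fun Q _ => h1 Q
    _ = ∑' R, ∑ Q ∈ F, (if inChain Q R then v R else 0) := by
        rw [Summable.tsum_finsetSum]; intro i _; exact ENNReal.summable
    _ ≤ ∑' R, N * (if R ∈ A then v R else 0) := by
        refine ENNReal.tsum_le_tsum fun R => ?_
        rw [← Finset.sum_filter, Finset.sum_const, nsmul_eq_mul]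
        have h2 : {Q : ℕ | Q ∈ F ∧ inChain Q R} = ↑(F.filter fun Q => inChain Q R) := by
          ext; simp
        have h3 := hN R
        rw [h2, Set.ncard_coe_finset] at h3
        split_ifs with h
        · gcongr
        · have : F.filter (fun Q => inChain Q R) = ∅ := by
            ext Q
            simp only [Finset.mem_filter, Finset.notMem_empty, iff_false]
            exact fun hh => h ⟨Q, hh⟩
          simp [this]
    _ = N * ∑' R, (if R ∈ A then v R else 0) := ENNReal.tsum_mul_left
    _ ≤ N * volume U := by
        gcongr
        have h4 : ∀ R, (if R ∈ A then v R else 0) =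
            volume (if R ∈ A then opCube (W.c R) (W.s R) else ∅) := by
          intro R; split_ifs <;> simp [v]
        simp_rw [h4]
        rw [← measure_iUnion]
        · refine measure_mono (Set.iUnion_subset fun R => ?_)
          split_ifs with h
          · obtain ⟨Q, hQ, hQR⟩ := h
            refine (opCube_sub _ _).trans (Set.Subset.trans ?_ (hU Q hQ))
            rw [hShadow]
            exact Set.subset_biUnion_of_mem (u := fun R => W.cube R) hQR
          · simp
        · intro i j hij
          have := W_disj W hij
          simp only [Function.onFun] at this ⊢
          split_ifs <;> simp [this]
        · intro R
          split_ifs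
          · exact (opCube_isOpen _ _).measurableSet
          · simp

/-- Suppose the bounded domain `G` satisfies a `β`-quasihyperbolic
boundary condition and `dim_M(∂G) < λ`, `λ ∈ [n-1, n)`. Whitney cubes carry chains
(`inChain Q R` meaning `Q*` belongs to the chain of `R`), with shadows
`S Q = ⋃ {R : inChain Q R}`; the chain construction satisfies `inChain R R`,
`diam(S Q) ≤ c_S diam(Q)^β`, and `#{Q ∈ W_j : Q* ∈ C(R)} ≤ c_n j`. Then there are
`σ ≥ 1` and `c > 0` such that for every `j`): (i) every `Q ∈ W_j` satisfies
`2^{-jn} ≤ |S(Q)| ≤ σ 2^{-jnβ}` and belongs to some `W_{j,k,σ}` with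
`0 ≤ k ≤ [j - jβ]`, where `W_{j,k,σ} = {Q ∈ W_j : 2^{-(j-k)n} ≤ |S(Q)| ≤ σ 2^{-(j-k-1)n}}`;
(ii) `#W_{j,k,σ} ≤ c j 2^{n(j-k) + jβ(λ-n)}` for `0 ≤ k ≤ [j - jβ]`. -/
theorem stmt_18 (n : ℕ) (hn : 2 ≤ n) (G : Set (EuclideanSpace ℝ (Fin n)))
    (hGo : IsOpen G) (hGc : IsConnected G) (hGb : Bornology.IsBounded G)
    (β : ℝ) (hβ : β ∈ Set.Ioc (0:ℝ) 1) (hqhbc : QHBC G β)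
    (l : ℝ) (hl : l ∈ Set.Ico ((n:ℝ) - 1) (n:ℝ))
    (hdim : upperMinkowskiDim n (frontier G) < l)
    (W : WhitneyDecomp n G) (inChain : ℕ → ℕ → Prop)
    (S : ℕ → Set (EuclideanSpace ℝ (Fin n)))
    (hShadow : ∀ Q, S Q = ⋃ R ∈ {R : ℕ | inChain Q R}, W.cube R)
    (hself : ∀ R, inChain R R)
    (cS : ℝ) (hcS : 0 < cS)
    (hdiam : ∀ Q, Metric.diam (S Q) ≤ cS * Metric.diam (W.cube Q) ^ β)
    (cn : ℝ) (hcn : 0 < cn)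
    (heks : ∀ (R : ℕ) (j : ℕ),
      ({Q : ℕ | W.s Q = (2:ℝ) ^ (-(j:ℤ)) ∧ inChain Q R}.ncard : ℝ) ≤ cn * j) :
    ∃ σ : ℝ, 1 ≤ σ ∧ ∃ c : ℝ, 0 < c ∧ ∀ j : ℕ,
      (∀ Q : ℕ, W.s Q = (2:ℝ) ^ (-(j:ℤ)) →
        (ENNReal.ofReal ((2:ℝ) ^ (-(j:ℝ) * n)) ≤ volume (S Q) ∧
          volume (S Q) ≤ ENNReal.ofReal (σ * (2:ℝ) ^ (-(j:ℝ) * n * β))) ∧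
        ∃ k : ℕ, (k : ℝ) ≤ (j:ℝ) - j * β ∧
          ENNReal.ofReal ((2:ℝ) ^ (-((j:ℝ) - k) * n)) ≤ volume (S Q) ∧
          volume (S Q) ≤ ENNReal.ofReal (σ * (2:ℝ) ^ (-((j:ℝ) - k - 1) * n))) ∧
      ∀ k : ℕ, (k : ℝ) ≤ (j:ℝ) - j * β →
        ({Q : ℕ | W.s Q = (2:ℝ) ^ (-(j:ℤ)) ∧
            ENNReal.ofReal ((2:ℝ) ^ (-((j:ℝ) - k) * n)) ≤ volume (S Q) ∧
            volume (S Q) ≤ ENNReal.ofReal (σ * (2:ℝ) ^ (-((j:ℝ) - k - 1) * n))}.ncard : ℝ)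
          ≤ c * j * (2:ℝ) ^ ((n:ℝ) * ((j:ℝ) - k) + (j:ℝ) * β * (l - n)) := by
  have hβ0 : 0 < β := hβ.1
  have hβ1 : β ≤ 1 := hβ.2
  have hn0 : (0:ℝ) < n := by exact_mod_cast (by omega : 0 < n)
  have hn2 : (2:ℝ) ≤ n := by exact_mod_cast hn
  have hl1 : (n:ℝ) - 1 ≤ l := hl.1
  have hl2 : l < n := hl.2
  have : Nonempty (Fin n) := ⟨⟨0, by omega⟩⟩
  have hfr : (frontier G).Nonempty := by
    rw [Set.nonempty_iff_ne_empty]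
    intro h
    rcases frontier_eq_empty_iff.1 h with h | h
    · exact hGc.nonempty.ne_empty h
    · exact NormedSpace.unbounded_univ ℝ (EuclideanSpace ℝ (Fin n)) (h ▸ hGb)
  have hfrb : Bornology.IsBounded (frontier G) := hGb.closure.subset frontier_subset_closure
  have hSG : ∀ Q, S Q ⊆ G := fun Q => by
    rw [hShadow]; exact Set.iUnion₂_subset fun R _ => W_sub W R
  have hQS : ∀ Q, W.cube Q ⊆ S Q := fun Q => by
    rw [hShadow]; exact Set.subset_biUnion_of_mem (u := fun R => W.cube R) (hself Q)
  set B : ℝ := cS * √n ^ β with hB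
  have hB0 : 0 < B := by positivity
  have hdS : ∀ (j Q : ℕ), W.s Q = (2:ℝ) ^ (-(j:ℤ)) →
      Metric.diam (S Q) ≤ B * (2:ℝ) ^ (-(j:ℝ) * β) := by
    intro j Q hQ
    refine (hdiam Q).trans ?_
    have h1 := diam_closedCube (W.c Q) (W.s Q) (W_pos W Q)
    have h2 : Metric.diam (W.cube Q) ^ β ≤ (√n * W.s Q) ^ β :=
      Real.rpow_le_rpow Metric.diam_nonneg h1 hβ0.le
    have h3 : (√n * W.s Q) ^ β = √n ^ β * (2:ℝ) ^ (-(j:ℝ) * β) := by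
      rw [Real.mul_rpow (by positivity) (W_pos W Q).le, hQ, Real.rpow_mul (by norm_num)]
      congr 2
      rw [← Real.rpow_intCast]; push_cast; rfl
    rw [h3] at h2
    calc _ ≤ cS * (√n ^ β * (2:ℝ) ^ (-(j:ℝ) * β)) := by gcongr
      _ = _ := by rw [hB]; ring
  have hcubeNe : ∀ Q, (W.cube Q).Nonempty := fun Q => ⟨W.c Q, fun i => by
    have := W_pos W Q
    simp; positivity⟩
  set v : ℝ := (volume (Metric.ball (0 : EuclideanSpace ℝ (Fin n)) 1)).toReal with hv
  have hv0 : 0 ≤ v := ENNReal.toReal_nonneg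
  set σ : ℝ := max 1 (B ^ n * v) with hσ
  have hσ1 : 1 ≤ σ := le_max_left _ _
  have hupper : ∀ (j Q : ℕ), W.s Q = (2:ℝ) ^ (-(j:ℤ)) →
      volume (S Q) ≤ ENNReal.ofReal (σ * (2:ℝ) ^ (-(j:ℝ) * n * β)) := by
    intro j Q hQ
    obtain ⟨x, hx⟩ := hcubeNe Q
    have h1 : S Q ⊆ Metric.closedBall x (B * (2:ℝ) ^ (-(j:ℝ) * β)) := fun y hy =>
      (Metric.dist_le_diam_of_mem (hGb.subset (hSG Q)) hy (hQS Q hx)).trans (hdS j Q hQ)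
    refine (measure_mono h1).trans ?_
    rw [Measure.addHaar_closedBall _ _ (by positivity), finrank_euclideanSpace, Fintype.card_fin,
      ← ENNReal.ofReal_toReal (measure_ball_lt_top (μ := volume)
        (x := (0 : EuclideanSpace ℝ (Fin n))) (r := 1)).ne, ← hv, ← ENNReal.ofReal_mul (by positivity)]
    apply ENNReal.ofReal_le_ofReal
    have h2 : ((2:ℝ) ^ (-(j:ℝ) * β)) ^ n = (2:ℝ) ^ (-(j:ℝ) * n * β) := by
      rw [← Real.rpow_natCast, ← Real.rpow_mul (by norm_num)]; congr 1; ring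
    rw [mul_pow, h2]
    calc _ = (B ^ n * v) * (2:ℝ) ^ (-(j:ℝ) * n * β) := by ring
      _ ≤ _ := by gcongr; exact le_max_right _ _
  have hlower : ∀ (j Q : ℕ), W.s Q = (2:ℝ) ^ (-(j:ℤ)) →
      ENNReal.ofReal ((2:ℝ) ^ (-(j:ℝ) * n)) ≤ volume (S Q) := by
    intro j Q hQ
    refine le_trans (le_of_eq ?_) (measure_mono (hQS Q))
    unfold WhitneyDecomp.cube
    rw [vol_closedCube _ _ (W_pos W Q), hQ, Real.rpow_mul (by norm_num), Real.rpow_natCast]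
    congr 2
    rw [← Real.rpow_intCast]; push_cast; rfl
  set K : ℝ := B + 4 * √n + 2 with hKdef
  have hK : 0 < K := by positivity
  obtain ⟨C, hC, hCb⟩ := thick_bound n (frontier G) hfrb l (by linarith) hl2 hdim K hK
  have hth : ∀ (j Q : ℕ), W.s Q = (2:ℝ) ^ (-(j:ℤ)) →
      S Q ⊆ ⋃ x ∈ frontier G, Metric.ball x (K * (2:ℝ) ^ (-(j:ℝ) * β)) := by
    intro j Q hQ y hy
    have hw : (2:ℝ) ^ (-(j:ℤ)) ≤ (2:ℝ) ^ (-(j:ℝ) * β) := by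
      rw [← Real.rpow_intCast]
      apply Real.rpow_le_rpow_of_exponent_le (by norm_num)
      push_cast
      have : (0:ℝ) ≤ j := by positivity
      nlinarith
    have hw0 : (0:ℝ) < (2:ℝ) ^ (-(j:ℤ)) := by positivity
    have h1 := diam_closedCube (W.c Q) (W.s Q) (W_pos W Q)
    have h2 := W.dist_le_diam Q
    have h3 : setDist (closedCube (W.c Q) (W.s Q)) (frontier G) <
        4 * (√n * (2:ℝ) ^ (-(j:ℤ))) + (2:ℝ) ^ (-(j:ℤ)) := by rw [hQ] at *; linarith
    obtain ⟨b0, hb0⟩ := hfr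
    obtain ⟨x0, hx0⟩ := hcubeNe Q
    obtain ⟨d, ⟨a, ha, b, hb, rfl⟩, hd⟩ := exists_lt_of_csInf_lt
      (s := {d : ℝ | ∃ a ∈ closedCube (W.c Q) (W.s Q), ∃ b ∈ frontier G, d = dist a b})
      ⟨_, x0, hx0, b0, hb0, rfl⟩ h3
    simp only [Set.mem_iUnion, Metric.mem_ball, exists_prop]
    refine ⟨b, hb, ?_⟩
    have h4 := (Metric.dist_le_diam_of_mem (hGb.subset (hSG Q)) hy (hQS Q ha)).trans (hdS j Q hQ)
    have h5 := dist_triangle y a b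
    have h6 : √n * (2:ℝ) ^ (-(j:ℤ)) ≤ √n * (2:ℝ) ^ (-(j:ℝ) * β) := by gcongr
    rw [hKdef]
    have : (B + 4 * √n + 2) * (2:ℝ) ^ (-(j:ℝ) * β) = B * (2:ℝ) ^ (-(j:ℝ) * β)
      + 4 * (√n * (2:ℝ) ^ (-(j:ℝ) * β)) + 2 * (2:ℝ) ^ (-(j:ℝ) * β) := by ring
    rw [this]
    linarith
  refine ⟨σ, hσ1, cn * (C * K ^ ((n:ℝ) - l)), by positivity, fun j => ⟨fun Q hQ =>
    ⟨⟨hlower j Q hQ, hupper j Q hQ⟩, ?_⟩, fun k hk => ?_⟩⟩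
  · classical
    let P : ℕ → Prop := fun k => (k : ℝ) ≤ (j:ℝ) - j * β ∧
      ENNReal.ofReal ((2:ℝ) ^ (-((j:ℝ) - k) * n)) ≤ volume (S Q)
    have hP0 : P 0 := by
      refine ⟨?_, ?_⟩
      · have : (0:ℝ) ≤ j := by positivity
        push_cast; nlinarith
      · simpa using hlower j Q hQ
    have hPk : P (Nat.findGreatest P j) := Nat.findGreatest_spec (Nat.zero_le j) hP0
    set k := Nat.findGreatest P j with hkdef
    refine ⟨k, hPk.1, hPk.2, ?_⟩
    have hnot : ¬ P (k + 1) := by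
      intro h
      have h1 : k + 1 ≤ j := by
        have h2 := h.1
        have : (0:ℝ) ≤ j * β := by positivity
        have : ((k + 1 : ℕ):ℝ) ≤ j := by linarith
        exact_mod_cast this
      have := Nat.le_findGreatest h1 h
      omega
    by_cases h : ((k + 1 : ℕ) : ℝ) ≤ (j:ℝ) - j * β
    · have h1 : volume (S Q) < ENNReal.ofReal ((2:ℝ) ^ (-((j:ℝ) - (k + 1 : ℕ)) * n)) := by
        by_contra hc
        exact hnot ⟨h, not_lt.1 hc⟩
      refine h1.le.trans (ENNReal.ofReal_le_ofReal ?_)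
      have h2 : -((j:ℝ) - (k + 1 : ℕ)) * n = -((j:ℝ) - k - 1) * n := by push_cast; ring
      rw [h2]
      exact le_mul_of_one_le_left (by positivity) hσ1
    · refine (hupper j Q hQ).trans (ENNReal.ofReal_le_ofReal ?_)
      push Not at h
      push_cast at h
      refine mul_le_mul_of_nonneg_left
        (Real.rpow_le_rpow_of_exponent_le (by norm_num) ?_) (by linarith)
      nlinarith
  · set T : Set ℕ := {Q : ℕ | W.s Q = (2:ℝ) ^ (-(j:ℤ)) ∧
            ENNReal.ofReal ((2:ℝ) ^ (-((j:ℝ) - k) * n)) ≤ volume (S Q) ∧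
            volume (S Q) ≤ ENNReal.ofReal (σ * (2:ℝ) ^ (-((j:ℝ) - k - 1) * n))} with hT
    have hWf := W_fin hGb W ((2:ℝ) ^ (-(j:ℤ))) (by positivity)
    have hTf : T.Finite := hWf.subset fun Q hQ => hQ.1
    have hmem : ∀ Q, Q ∈ hTf.toFinset → W.s Q = (2:ℝ) ^ (-(j:ℤ)) ∧
            ENNReal.ofReal ((2:ℝ) ^ (-((j:ℝ) - k) * n)) ≤ volume (S Q) := fun Q hQ => by
      have := hTf.mem_toFinset.1 hQ
      exact ⟨this.1, this.2.1⟩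
    have hj0 : (0:ℝ) ≤ j := by positivity
    have h1 := double_count W inChain S hShadow hTf.toFinset (ENNReal.ofReal (cn * j))
      (⋃ x ∈ frontier G, Metric.ball x (K * (2:ℝ) ^ (-(j:ℝ) * β)))
      (fun Q hQ => hth j Q (hmem Q hQ).1) (fun R => by
        rw [← ENNReal.ofReal_natCast]
        apply ENNReal.ofReal_le_ofReal
        refine le_trans ?_ (heks R j)
        norm_cast
        refine Set.ncard_le_ncard (fun Q hQ => ⟨(hmem Q hQ.1).1, hQ.2⟩)
          (hWf.subset fun Q hQ => hQ.1))
    have ht1 : (2:ℝ) ^ (-(j:ℝ) * β) ≤ 1 :=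
      Real.rpow_le_one_of_one_le_of_nonpos (by norm_num) (by nlinarith)
    have h2 := hCb (K * (2:ℝ) ^ (-(j:ℝ) * β)) (by positivity)
      (mul_le_of_le_one_right hK.le ht1)
    have h3 : (T.ncard : ℝ≥0∞) * ENNReal.ofReal ((2:ℝ) ^ (-((j:ℝ) - k) * n)) ≤
        ∑ Q ∈ hTf.toFinset, volume (S Q) := by
      rw [Set.ncard_eq_toFinset_card T hTf, ← nsmul_eq_mul]
      exact Finset.card_nsmul_le_sum _ _ _ fun Q hQ => (hmem Q hQ).2
    have h4 : (T.ncard : ℝ) * (2:ℝ) ^ (-((j:ℝ) - k) * n) ≤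
        cn * j * (C * (K * (2:ℝ) ^ (-(j:ℝ) * β)) ^ ((n:ℝ) - l)) := by
      have h5 := (h3.trans h1).trans (mul_le_mul_right h2 _)
      rw [← ENNReal.ofReal_natCast, ← ENNReal.ofReal_mul (by positivity),
        ← ENNReal.ofReal_mul (by positivity)] at h5
      exact (ENNReal.ofReal_le_ofReal_iff (by positivity)).1 h5
    rw [Real.mul_rpow hK.le (by positivity), ← Real.rpow_mul (by norm_num)] at h4
    have h6 : (2:ℝ) ^ (-((j:ℝ) - k) * n) * (2:ℝ) ^ ((n:ℝ) * ((j:ℝ) - k)) = 1 := by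
      rw [← Real.rpow_add (by norm_num)]
      have : -((j:ℝ) - k) * n + (n:ℝ) * ((j:ℝ) - k) = 0 := by ring
      rw [this, Real.rpow_zero]
    have h7 : -(j:ℝ) * β * ((n:ℝ) - l) = (j:ℝ) * β * (l - n) := by ring
    rw [h7] at h4
    rw [Real.rpow_add (by norm_num)]
    calc (T.ncard : ℝ) = (T.ncard : ℝ) * (2:ℝ) ^ (-((j:ℝ) - k) * n) *
          (2:ℝ) ^ ((n:ℝ) * ((j:ℝ) - k)) := by rw [mul_assoc, h6, mul_one]
      _ ≤ _ := mul_le_mul_of_nonneg_right h4 (by positivity)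
      _ = _ := by ring
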